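/- Let a ∈ [0,1] and b₀ = (3+a)/(4(2+a)). There exists a constant C > 0, depending only on a and the fixed dyadic cutoffs, such that for every Schwartz function f on ℝ² one has ‖f‖_{L⁴(ℝ²)} ≤ C ‖f‖_{X^{b₀}_0}. -/

import Mathlib

/-!
Write `f = 𝓕 Φ`, where `Φ` is `f̂` up to a dilation by `2π`, and decompose `Φ = ∑ χ_j Φ` by the size
`2 ^ j` of the modulation `λ - ω(ξ)`. By the triangle inequality in `L⁴` it suffices to bound each
`𝓕 (χ_j Φ)` in `L⁴` by `C 2 ^ (j b₀) ‖χ_j Φ‖₂` with `b₀ = (3 + a) / (4 (2 + a))`.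

For a single piece `G`, supported in a set `A`, Plancherel and Cauchy–Schwarz give
`‖𝓕 G‖₄⁴ = ‖𝓕 (G ⋆ G)‖₂² ≤ sup_q |{r ∈ A, q - r ∈ A}| · ‖G‖₂⁴`. The two half-planes `ξ ≥ 0` and
`ξ ≤ 0` are treated separately, so `A` is a strip of width `L ~ 2 ^ j` around one half of the curve
`λ = ω(ξ)`. If `r = (ξ, λ)` and `q - r` both lie in `A`, then `λ` is confined to an interval of
length `2L`, and `ω(ξ) + ω(q₁ - ξ)` is within `2L` of `q₂`. Clarkson's inequality for the power
`p = 2 + a` shows that this function of `ξ` increases by at least a multiple of `(t - s) ^ p`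
between points `s ≤ t` of `[q₁/2, q₁]`, so `ξ` is confined to a set of measure `O(L ^ (1/p))`. The
fibre thus has measure `O(L ^ (1 + 1/p))`, and the fourth root of this has exponent `b₀`.

Since `Φ` decays rapidly, the energy at modulation `2 ^ j` is `O(4 ^ (-j))`; the sum defining the
norm therefore converges, and its `∑'` is not the junk value `0`.
-/

open MeasureTheory Complex

noncomputable section

/-- The dispersive symbol `ω(ξ) = ξ |ξ|^(1+a)`. -/
def disp (a ξ : ℝ) : ℝ := ξ * |ξ| ^ (1 + a)

/-- Fourier transform on `ℝ`, convention `f̂(ξ) = ∫ e^{ixξ} f(x) dx`. -/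
def FT1 (f : ℝ → ℂ) (ξ : ℝ) : ℂ :=
  ∫ x : ℝ, Complex.exp (Complex.I * ((x * ξ : ℝ) : ℂ)) * f x

/-- Spacetime Fourier transform, convention `f̂(ξ,λ) = ∫ e^{i(xξ+tλ)} f(x,t) dx dt`,
for `f : ℝ × ℝ → ℂ` with first coordinate `x` (space) and second `t` (time). -/
def FT2 (f : ℝ × ℝ → ℂ) (ξ lam : ℝ) : ℂ :=
  ∫ p : ℝ × ℝ, Complex.exp (Complex.I * ((p.1 * ξ + p.2 * lam : ℝ) : ℂ)) * f p

/-- The dyadic cutoffs `χ_j`: `χ_0 = χ₀` and `χ_j(z) = χ(2^{-j} z)` for `j ≥ 1`. -/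
def chiJ (χ₀ χ : ℝ → ℝ) (j : ℕ) (z : ℝ) : ℝ :=
  if j = 0 then χ₀ z else χ ((2 : ℝ) ^ (-(j : ℝ)) * z)

/-- Hypotheses on the fixed dyadic cutoffs. -/
structure DyadicCutoffs (χ₀ χ : ℝ → ℝ) : Prop where
  smooth0 : ContDiff ℝ (⊤ : ℕ∞) χ₀
  even0 : ∀ z, χ₀ (-z) = χ₀ z
  mem0 : ∀ z, χ₀ z ∈ Set.Icc (0 : ℝ) 1
  supp0 : ∀ z, 2 < |z| → χ₀ z = 0
  one0 : ∀ z, |z| ≤ 1 → χ₀ z = 1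
  smooth1 : ContDiff ℝ (⊤ : ℕ∞) χ
  even1 : ∀ z, χ (-z) = χ z
  mem1 : ∀ z, χ z ∈ Set.Icc (0 : ℝ) 1
  supp1 : ∀ z, χ z ≠ 0 → 1 / 2 < |z| ∧ |z| < 2
  partition : ∀ z, ∑' j : ℕ, chiJ χ₀ χ j z = 1

/-- A smooth time cutoff supported in `[-1,1]`. -/
structure TimeCutoff (ψ : ℝ → ℝ) : Prop where
  smooth : ContDiff ℝ (⊤ : ℕ∞) ψ
  supp : ∀ t, ψ t ≠ 0 → |t| ≤ 1

/-- The norm `‖f‖_{X^b_s}`. -/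
def Xnorm (a : ℝ) (χ₀ χ : ℝ → ℝ) (b s : ℝ) (f : ℝ × ℝ → ℂ) : ℝ :=
  ∑' j : ℕ, (2 : ℝ) ^ ((j : ℝ) * b) *
    (∫ p : ℝ × ℝ, chiJ χ₀ χ j (p.2 - disp a p.1) * (1 + |p.1|) ^ (2 * s) *
      ‖FT2 f p.1 p.2‖ ^ 2) ^ ((1 : ℝ) / 2)

/-- The norm `‖f‖_{Y^b_{s₀,s₁}} = ‖x·f‖_{X^b_{s₀}} + ‖t·f‖_{X^b_{s₁}}`. -/
def Ynorm (a : ℝ) (χ₀ χ : ℝ → ℝ) (b s₀ s₁ : ℝ) (f : ℝ × ℝ → ℂ) : ℝ :=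
  Xnorm a χ₀ χ b s₀ (fun p => (p.1 : ℂ) * f p) +
    Xnorm a χ₀ χ b s₁ (fun p => (p.2 : ℂ) * f p)

/-- The norm `‖f‖_{Z^b_s} = ‖f‖_{X^b_s} + ‖f‖_{Y^b_{s-2s*,s}}`, where `s* = 1/2 + a/2`. -/
def Znorm (a : ℝ) (χ₀ χ : ℝ → ℝ) (b s : ℝ) (f : ℝ × ℝ → ℂ) : ℝ :=
  Xnorm a χ₀ χ b s f + Ynorm a χ₀ χ b (s - 2 * (1 / 2 + a / 2)) s f

/-- The norm `‖f‖_{X̃^b_s}`. -/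
def XtildeNorm (a b s : ℝ) (f : ℝ × ℝ → ℂ) : ℝ :=
  (∫ p : ℝ × ℝ, (1 + |p.2 - disp a p.1|) ^ (2 * b) * (1 + |p.1|) ^ (2 * s) *
    ‖FT2 f p.1 p.2‖ ^ 2) ^ ((1 : ℝ) / 2)

/-- The Sobolev norm `‖g‖_{H^s} = (∫ (1+|ξ|)^{2s} |ĝ(ξ)|² dξ)^{1/2}`. -/
def Hnorm (s : ℝ) (g : ℝ → ℂ) : ℝ :=
  (∫ ξ : ℝ, (1 + |ξ|) ^ (2 * s) * ‖FT1 g ξ‖ ^ 2) ^ ((1 : ℝ) / 2)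

/-- The weighted norm `‖g‖_{F^s} = ‖g‖_{H^s} + ‖x·g‖_{H^{s-2s*}}` (here `sstar = s*`). -/
def Fnorm (sstar s : ℝ) (g : ℝ → ℂ) : ℝ :=
  Hnorm s g + Hnorm (s - 2 * sstar) (fun x => (x : ℂ) * g x)

/-- The `L^p` norm `(∫ ‖f‖^p)^{1/p}`. -/
def Lpnorm {α : Type*} [MeasureSpace α] {E : Type*} [NormedAddCommGroup E]
    (p : ℝ) (f : α → E) : ℝ :=
  (∫ x, ‖f x‖ ^ p) ^ (1 / p)

/-- The linear propagator `W(t)`, defined via Fourier inversion so that its Fourier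
transform in `x` is `e^{itω(ξ)} û₀(ξ)`. -/
def Wgrp (a : ℝ) (u₀ : ℝ → ℂ) (t x : ℝ) : ℂ :=
  ((1 / (2 * Real.pi) : ℝ) : ℂ) *
    ∫ ξ : ℝ, Complex.exp (-(Complex.I * ((x * ξ : ℝ) : ℂ))) *
      (Complex.exp (Complex.I * ((t * disp a ξ : ℝ) : ℂ)) * FT1 u₀ ξ)

/-- The Fourier multiplier `D^σ` with symbol `|ξ|^σ`, via Fourier inversion. -/
def Dop (σ : ℝ) (g : ℝ → ℂ) (x : ℝ) : ℂ :=
  ((1 / (2 * Real.pi) : ℝ) : ℂ) *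
    ∫ ξ : ℝ, Complex.exp (-(Complex.I * ((x * ξ : ℝ) : ℂ))) *
      (((|ξ| ^ σ : ℝ) : ℂ) * FT1 g ξ)

open scoped ContDiff Convolution ENNReal FourierTransform Pointwise SchwartzMap

/-! ### The bilinear Fourier estimate -/

section SumFiber

variable {G H : Type*} [AddCommGroup G] [AddCommGroup H] {A A' B B' : Set G} {q : G}

/-- The fibre over `q` of the addition map `A × B → G`, recorded by its first coordinate. -/
def sumFiber (A B : Set G) (q : G) : Set G := {r | r ∈ A ∧ q - r ∈ B}

theorem sumFiber_mono (hA : A ⊆ A') (hB : B ⊆ B') : sumFiber A B q ⊆ sumFiber A' B' q :=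
  fun _ hr => ⟨hA hr.1, hB hr.2⟩

theorem sumFiber_preimage (T : H →+ G) (A B : Set G) (q : H) :
    sumFiber (T ⁻¹' A) (T ⁻¹' B) q = T ⁻¹' sumFiber A B (T q) := by
  ext r
  simp only [sumFiber, Set.mem_ofPred_eq, Set.mem_preimage, map_sub]

theorem measure_sumFiber_neg [MeasurableSpace G] [MeasurableNeg G] (μ : Measure G)
    [μ.IsNegInvariant] (A B : Set G) (q : G) :
    μ (sumFiber (-A) (-B) q) = μ (sumFiber A B (-q)) :=
  (congrArg μ (sumFiber_preimage negAddMonoidHom A B q)).trans (Measure.measure_preimage_neg μ _)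

end SumFiber

section Convolution

theorem eLpNorm_le_eLpNorm_mul_rpow_measure_of_support_subset {α ε : Type*} [MeasurableSpace α]
    {μ : Measure α} [NormedAddCommGroup ε] {f : α → ε} {s : Set α} {p q : ℝ≥0∞} (hpq : p ≤ q)
    (hf : AEStronglyMeasurable f μ) (hs : Function.support f ⊆ s) :
    eLpNorm f p μ ≤ eLpNorm f q μ * μ s ^ (1 / p.toReal - 1 / q.toReal) := by
  have h := eLpNorm_le_eLpNorm_mul_rpow_measure_univ hpq (hf.restrict (s := s))
  rwa [eLpNorm_restrict_eq_of_support_subset hs, eLpNorm_restrict_eq_of_support_subset hs,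
    Measure.restrict_apply_univ] at h

theorem eLpNorm_two_sq {α ε : Type*} [MeasurableSpace α] {μ : Measure α} [NormedAddCommGroup ε]
    (f : α → ε) : eLpNorm f 2 μ ^ 2 = ∫⁻ x, ‖f x‖ₑ ^ 2 ∂μ := by
  simpa using eLpNorm_nnreal_pow_eq_lintegral (f := f) (μ := μ) (p := 2) two_ne_zero

variable {G : Type*} [AddCommGroup G] [MeasurableSpace G] [MeasurableAdd₂ G] [MeasurableNeg G]
  {μ : Measure G} [SFinite μ] [μ.IsAddLeftInvariant]
  {𝕜 E E' F : Type*} [NontriviallyNormedField 𝕜] [NormedAddCommGroup E] [NormedAddCommGroup E']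
  [NormedAddCommGroup F] [NormedSpace 𝕜 E] [NormedSpace 𝕜 E'] [NormedSpace 𝕜 F] [NormedSpace ℝ F]
  {f : G → E} {g : G → E'} {M : ℝ≥0∞}

/-- Cauchy–Schwarz on the set where the integrand of the convolution does not vanish. -/
theorem enorm_convolution_sq_le (L : E →L[𝕜] E' →L[𝕜] F) (hf : AEStronglyMeasurable f μ)
    (hg : AEStronglyMeasurable g μ) (q : G) :
    ‖(f ⋆[L, μ] g) q‖ₑ ^ 2 ≤ ‖L‖ₑ ^ 2 * μ (sumFiber f.support g.support q) *
      ∫⁻ r, ‖f r‖ₑ ^ 2 * ‖g (q - r)‖ₑ ^ 2 ∂μ := by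
  set h : G → F := fun r => L (f r) (g (q - r))
  have hh : AEStronglyMeasurable h μ :=
    hf.convolution_integrand_snd' L
      (hg.mono_ac (quasiMeasurePreserving_sub_left_of_right_invariant μ q).absolutelyContinuous)
  have hsupp : h.support ⊆ sumFiber f.support g.support q := fun r hr =>
    ⟨fun h0 => hr (by simp [h, h0]), fun h0 => hr (by simp [h, h0])⟩
  have hone : ‖(f ⋆[L, μ] g) q‖ₑ ≤ eLpNorm h 1 μ := by
    rw [eLpNorm_one_eq_lintegral_enorm]
    exact enorm_integral_le_lintegral_enorm _
  have htwo := eLpNorm_le_eLpNorm_mul_rpow_measure_of_support_subset one_le_two hh hsupp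
  calc ‖(f ⋆[L, μ] g) q‖ₑ ^ 2
      ≤ (eLpNorm h 2 μ * μ (sumFiber f.support g.support q) ^ (1 / 2 : ℝ)) ^ 2 := by
        gcongr
        refine hone.trans (htwo.trans_eq ?_)
        norm_num
    _ = μ (sumFiber f.support g.support q) * ∫⁻ r, ‖h r‖ₑ ^ 2 ∂μ := by
        rw [mul_pow, eLpNorm_two_sq, ← ENNReal.rpow_mul_natCast, mul_comm]
        norm_num
    _ ≤ μ (sumFiber f.support g.support q) *
          ∫⁻ r, ‖L‖ₑ ^ 2 * (‖f r‖ₑ ^ 2 * ‖g (q - r)‖ₑ ^ 2) ∂μ := by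
        gcongr with r
        rw [← mul_pow, ← mul_pow, ← mul_assoc]
        gcongr
        exact L.le_opENorm₂ _ _
    _ = _ := by
        rw [lintegral_const_mul' _ _ (by finiteness)]
        ring

theorem aemeasurable_mul_sub {φ ψ : G → ℝ≥0∞} (hφ : AEMeasurable φ μ) (hψ : AEMeasurable ψ μ) :
    AEMeasurable (fun z : G × G => φ z.2 * ψ (z.1 - z.2)) (μ.prod μ) :=
  hφ.comp_snd.mul
    (hψ.comp_quasiMeasurePreserving (quasiMeasurePreserving_sub_of_right_invariant μ μ))

theorem lintegral_lintegral_mul_sub {φ ψ : G → ℝ≥0∞} (hφ : AEMeasurable φ μ)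
    (hψ : AEMeasurable ψ μ) :
    ∫⁻ q, ∫⁻ r, φ r * ψ (q - r) ∂μ ∂μ = (∫⁻ x, φ x ∂μ) * ∫⁻ x, ψ x ∂μ := by
  rw [lintegral_lintegral_swap (aemeasurable_mul_sub hφ hψ), ← lintegral_mul_const'' _ hφ]
  refine lintegral_congr fun r => ?_
  have hψr : AEMeasurable (fun q => ψ (q - r)) μ :=
    hψ.comp_quasiMeasurePreserving (measurePreserving_sub_right μ r).quasiMeasurePreserving
  rw [lintegral_const_mul'' _ hψr, lintegral_sub_right_eq_self ψ r]

theorem eLpNorm_convolution_two_le (L : E →L[𝕜] E' →L[𝕜] F) (hf : AEStronglyMeasurable f μ)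
    (hg : AEStronglyMeasurable g μ) (hM : ∀ q, μ (sumFiber f.support g.support q) ≤ M) :
    eLpNorm (f ⋆[L, μ] g) 2 μ ≤ ‖L‖ₑ * M ^ (1 / 2 : ℝ) * (eLpNorm f 2 μ * eLpNorm g 2 μ) := by
  have hf2 : AEMeasurable (fun x => ‖f x‖ₑ ^ 2) μ := hf.enorm.pow_const 2
  have hg2 : AEMeasurable (fun x => ‖g x‖ₑ ^ 2) μ := hg.enorm.pow_const 2
  have hsq : eLpNorm (f ⋆[L, μ] g) 2 μ ^ 2 ≤
      (‖L‖ₑ * M ^ (1 / 2 : ℝ) * (eLpNorm f 2 μ * eLpNorm g 2 μ)) ^ 2 := by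
    calc eLpNorm (f ⋆[L, μ] g) 2 μ ^ 2
        = ∫⁻ q, ‖(f ⋆[L, μ] g) q‖ₑ ^ 2 ∂μ := eLpNorm_two_sq _
      _ ≤ ∫⁻ q, ‖L‖ₑ ^ 2 * M * ∫⁻ r, ‖f r‖ₑ ^ 2 * ‖g (q - r)‖ₑ ^ 2 ∂μ ∂μ := by
          gcongr with q
          exact (enorm_convolution_sq_le L hf hg q).trans (by gcongr; exact hM q)
      _ = ‖L‖ₑ ^ 2 * M * ((∫⁻ x, ‖f x‖ₑ ^ 2 ∂μ) * ∫⁻ x, ‖g x‖ₑ ^ 2 ∂μ) := by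
          rw [lintegral_const_mul'' _ (aemeasurable_mul_sub hf2 hg2).lintegral_prod_right',
            lintegral_lintegral_mul_sub hf2 hg2]
      _ = _ := by
          rw [mul_pow, mul_pow, mul_pow, eLpNorm_two_sq, eLpNorm_two_sq,
            ← ENNReal.rpow_mul_natCast]
          norm_num
  exact (ENNReal.pow_le_pow_left_iff two_ne_zero).1 hsq

end Convolution

section Fourier

variable {E : Type*} [NormedAddCommGroup E] [InnerProductSpace ℝ E] [FiniteDimensional ℝ E]
  [MeasurableSpace E] [BorelSpace E]

section Plancherel

theorem continuous_fourier {F : Type*} [NormedAddCommGroup F] [NormedSpace ℂ F] {f : E → F}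
    (hf : Integrable f) : Continuous (𝓕 f) :=
  VectorFourier.fourierIntegral_continuous Real.continuous_fourierChar continuous_inner hf

variable {F : Type*} [NormedAddCommGroup F] [InnerProductSpace ℂ F] [CompleteSpace F] {f : E → F}

theorem integral_fourier_smul_eq (φ : 𝓢(E, ℂ)) (hf : Integrable f) :
    ∫ x, (𝓕 φ) x • f x = ∫ x, φ x • 𝓕 f x := by
  have h := VectorFourier.integral_fourierIntegral_smul_eq_flip (μ := volume) (ν := volume)
    (L := innerₗ E) Real.continuous_fourierChar continuous_inner φ.integrable hf
  rwa [flip_innerₗ] at h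

theorem coeFn_fourier_toLp (h1 : Integrable f) (h2 : MemLp f 2) :
    (𝓕 (h2.toLp f) : Lp F 2) =ᵐ[volume] 𝓕 f := by
  refine ae_eq_of_integral_contDiff_smul_eq ((Lp.memLp _).locallyIntegrable one_le_two)
    (continuous_fourier h1).locallyIntegrable fun g hg hgc => ?_
  have hg' : ContDiff ℝ ∞ (fun x => (g x : ℂ)) := Complex.ofRealCLM.contDiff.comp hg
  have hgc' : HasCompactSupport (fun x => (g x : ℂ)) := hgc.comp_left Complex.ofReal_zero
  set φ : 𝓢(E, ℂ) := hgc'.toSchwartzMap hg'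
  have hdistr := DFunLike.congr_fun (Lp.fourier_toTemperedDistribution_eq (h2.toLp f)) φ
  simp only [TemperedDistribution.fourier_apply, Lp.toTemperedDistribution_apply] at hdistr
  calc ∫ x, g x • (𝓕 (h2.toLp f) : Lp F 2 (volume : Measure E)) x
      = ∫ x, (𝓕 φ) x • h2.toLp f x := by
        exact hdistr.symm
    _ = ∫ x, (𝓕 φ) x • f x := by
        refine integral_congr_ae ?_
        filter_upwards [h2.coeFn_toLp] with x hx
        rw [hx]
    _ = ∫ x, g x • 𝓕 f x := integral_fourier_smul_eq φ h1

theorem eLpNorm_fourier_two (h1 : Integrable f) (h2 : MemLp f 2) :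
    eLpNorm (𝓕 f) 2 = eLpNorm f 2 := by
  have h := Lp.norm_fourier_eq (h2.toLp f)
  rw [Lp.norm_def, Lp.norm_def, ENNReal.toReal_eq_toReal_iff' (Lp.eLpNorm_ne_top _)
    (Lp.eLpNorm_ne_top _)] at h
  rw [← eLpNorm_congr_ae (coeFn_fourier_toLp h1 h2), h, eLpNorm_congr_ae h2.coeFn_toLp]

end Plancherel

section Bilinear

variable {f g : E → ℂ} {A B : Set E} {M : ℝ≥0∞}

/-- Plancherel applied to `𝓕 f * 𝓕 g = 𝓕 (f ⋆ g)`. -/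
theorem eLpNorm_fourier_mul_fourier_le (hf1 : Integrable f) (hf2 : MemLp f 2) (hg1 : Integrable g)
    (hg2 : MemLp g 2) (hM : M ≠ ⊤) (hfg : ∀ q, volume (sumFiber f.support g.support q) ≤ M) :
    eLpNorm (fun x => 𝓕 f x * 𝓕 g x) 2 ≤ M ^ (1 / 2 : ℝ) * (eLpNorm f 2 * eLpNorm g 2) := by
  have hconv : eLpNorm (f ⋆[ContinuousLinearMap.mul ℂ ℂ] g) 2 ≤
      M ^ (1 / 2 : ℝ) * (eLpNorm f 2 * eLpNorm g 2) := by
    have h := eLpNorm_convolution_two_le (ContinuousLinearMap.mul ℂ ℂ) hf1.1 hg1.1 hfg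
    rwa [enorm_eq_nnnorm, ContinuousLinearMap.opNNNorm_mul, ENNReal.coe_one, one_mul] at h
  have hconv1 : Integrable (f ⋆[ContinuousLinearMap.mul ℂ ℂ] g) :=
    hf1.integrable_convolution _ hg1
  have hconv2 : MemLp (f ⋆[ContinuousLinearMap.mul ℂ ℂ] g) 2 :=
    ⟨hconv1.1, hconv.trans_lt (ENNReal.mul_lt_top (ENNReal.rpow_lt_top_of_nonneg (by norm_num) hM)
      (ENNReal.mul_lt_top hf2.eLpNorm_lt_top hg2.eLpNorm_lt_top))⟩
  have hprod : (fun x => 𝓕 f x * 𝓕 g x) = 𝓕 (f ⋆[ContinuousLinearMap.mul ℂ ℂ] g) :=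
    funext fun x => (Real.fourier_mul_convolution_eq hf1 hg1 x).symm
  rwa [hprod, eLpNorm_fourier_two hconv1 hconv2]

theorem eLpNorm_fourier_four_le (h1 : Integrable f) (h2 : MemLp f 2) (hM : M ≠ ⊤)
    (hf : ∀ q, volume (sumFiber f.support f.support q) ≤ M) :
    eLpNorm (𝓕 f) 4 ≤ M ^ (1 / 4 : ℝ) * eLpNorm f 2 := by
  have hsq : eLpNorm (𝓕 f) 4 ^ 2 = eLpNorm (fun x => 𝓕 f x * 𝓕 f x) 2 := by
    have h := eLpNorm_norm_rpow (μ := volume) (p := 2) (𝓕 f) (q := 2) two_pos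
    norm_num [ENNReal.ofReal_ofNat] at h
    rw [← h, ← eLpNorm_norm (fun x => 𝓕 f x * 𝓕 f x)]
    simp only [norm_mul, sq]
  have hle : eLpNorm (𝓕 f) 4 ^ 2 ≤ (M ^ (1 / 4 : ℝ) * eLpNorm f 2) ^ 2 := by
    have hroot : (M ^ (1 / 4 : ℝ)) ^ 2 = M ^ (1 / 2 : ℝ) := by
      rw [← ENNReal.rpow_mul_natCast]
      norm_num
    rw [hsq, mul_pow, hroot, sq (eLpNorm f 2 volume)]
    exact eLpNorm_fourier_mul_fourier_le h1 h2 h1 h2 hM hf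
  exact (ENNReal.pow_le_pow_left_iff two_ne_zero).1 hle

theorem eLpNorm_fourier_four_le_of_support_subset_union (h1 : Integrable f) (h2 : MemLp f 2)
    (hM : M ≠ ⊤) (hA : MeasurableSet A) (hf : f.support ⊆ A ∪ B)
    (hAM : ∀ q, volume (sumFiber A A q) ≤ M) (hBM : ∀ q, volume (sumFiber B B q) ≤ M) :
    eLpNorm (𝓕 f) 4 ≤ 2 * M ^ (1 / 4 : ℝ) * eLpNorm f 2 := by
  have hpiece : ∀ {S T : Set E}, MeasurableSet S → f.support ∩ S ⊆ T →
      (∀ q, volume (sumFiber T T q) ≤ M) →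
      eLpNorm (𝓕 (S.indicator f)) 4 ≤ M ^ (1 / 4 : ℝ) * eLpNorm f 2 := by
    intro S T hS hST hT
    have hsupp : (S.indicator f).support ⊆ T := by
      rwa [Set.support_indicator, Set.inter_comm]
    refine (eLpNorm_fourier_four_le (h1.indicator hS) (h2.indicator hS) hM fun q =>
      (measure_mono (sumFiber_mono hsupp hsupp)).trans (hT q)).trans ?_
    gcongr
    exact eLpNorm_indicator_le f
  have hsplit : 𝓕 f = 𝓕 (A.indicator f) + 𝓕 (Aᶜ.indicator f) := by
    conv_lhs => rw [← Set.indicator_self_add_compl A f]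
    exact VectorFourier.fourierIntegral_add Real.continuous_fourierChar continuous_inner
      (h1.indicator hA) (h1.indicator hA.compl)
  rw [hsplit, mul_assoc, two_mul]
  exact (eLpNorm_add_le (continuous_fourier (h1.indicator hA)).aestronglyMeasurable
    (continuous_fourier (h1.indicator hA.compl)).aestronglyMeasurable (by norm_num)).trans
    (add_le_add (hpiece hA Set.inter_subset_right hAM)
      (hpiece hA.compl (fun x hx => (hf hx.1).resolve_left hx.2) hBM))

end Bilinear

end Fourier

/-! ### The resonance set -/

section Resonance

/-- The parallelogram identity `((u + v)² + (u - v)²) / 2 = u² + v²`, combined with superadditivity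
and convexity of `x ^ (p / 2)`. -/
theorem clarkson_rpow {p u v : ℝ} (hp : 2 ≤ p) (hv : 0 ≤ v) (hvu : v ≤ u) :
    2 * (u ^ p + v ^ p) ≤ (u + v) ^ p + (u - v) ^ p := by
  have hp2 : 1 ≤ p / 2 := by linarith
  have sq_rpow : ∀ x : ℝ, 0 ≤ x → (x ^ 2) ^ (p / 2) = x ^ p := fun x hx => by
    rw [← Real.rpow_natCast_mul hx]
    congr 1
    push_cast
    ring
  have hsuper := Real.add_rpow_le_rpow_add (sq_nonneg u) (sq_nonneg v) hp2
  have hconv := (convexOn_rpow hp2).2 (sq_nonneg (u + v)) (sq_nonneg (u - v))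
    one_half_pos.le one_half_pos.le (add_halves 1)
  simp only [smul_eq_mul] at hconv
  rw [show 1 / 2 * (u + v) ^ 2 + 1 / 2 * (u - v) ^ 2 = u ^ 2 + v ^ 2 by ring] at hconv
  rw [sq_rpow u (hv.trans hvu), sq_rpow v hv] at hsuper
  rw [sq_rpow _ (by linarith), sq_rpow _ (by linarith)] at hconv
  linarith

theorem convexOn_add_le_add_of_add_eq {s : Set ℝ} {f : ℝ → ℝ} (hf : ConvexOn ℝ s f)
    {x y u v : ℝ} (hx : x ∈ s) (hy : y ∈ s) (hxu : x ≤ u) (huy : u ≤ y) (huv : u + v = x + y) :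
    f u + f v ≤ f x + f y := by
  obtain ⟨α, β, hα, hβ, hαβ, rfl⟩ := Convex.mem_Icc (hxu.trans huy) |>.1 ⟨hxu, huy⟩
  obtain rfl : v = β * x + α * y := by
    obtain rfl : β = 1 - α := by linarith
    linarith
  have hu := hf.2 hx hy hα hβ hαβ
  have hv := hf.2 hx hy hβ hα (by linarith)
  simp only [smul_eq_mul] at hu hv
  obtain rfl : β = 1 - α := by linarith
  linarith

theorem resonance_gap {p q s t : ℝ} (hp : 2 ≤ p) (hs : q / 2 ≤ s) (hst : s ≤ t) (ht : t ≤ q) :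
    2 * (t - s) ^ p ≤ (t ^ p + (q - t) ^ p) - (s ^ p + (q - s) ^ p) := by
  have hclarkson := clarkson_rpow (u := q - s) (v := t - s) hp (by linarith) (by linarith)
  have hmajor := convexOn_add_le_add_of_add_eq (convexOn_rpow (p := p) (by linarith)) (x := q - s)
    (y := t) (u := s) (v := q - s + (t - s)) (Set.mem_Ici.2 (by linarith))
    (Set.mem_Ici.2 (by linarith)) (by linarith) hst (by linarith)
  rw [show q - s - (t - s) = q - t by ring] at hclarkson
  linarith

theorem volume_le_of_forall_sub_le {s : Set ℝ} {ε : ℝ}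
    (h : ∀ x ∈ s, ∀ y ∈ s, x ≤ y → y - x ≤ ε) : volume s ≤ ENNReal.ofReal ε := by
  refine (Real.volume_le_diam s).trans (Metric.ediam_le fun x hx y hy => ?_)
  rw [edist_dist]
  refine ENNReal.ofReal_le_ofReal ?_
  rcases le_total x y with hxy | hyx
  · rw [dist_comm, Real.dist_eq, abs_of_nonneg (sub_nonneg.2 hxy)]
    exact h x hx y hy hxy
  · rw [Real.dist_eq, abs_of_nonneg (sub_nonneg.2 hyx)]
    exact h y hy x hx hyx

theorem volume_resonance_le {p : ℝ} (hp : 2 ≤ p) (q l δ : ℝ) :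
    volume {x : ℝ | 0 ≤ x ∧ 0 ≤ q - x ∧ |x ^ p + (q - x) ^ p - l| ≤ δ} ≤
      2 * ENNReal.ofReal (δ ^ (1 / p)) := by
  set S := {x : ℝ | 0 ≤ x ∧ 0 ≤ q - x ∧ |x ^ p + (q - x) ^ p - l| ≤ δ}
  set U := S ∩ Set.Ici (q / 2)
  have hU : volume U ≤ ENNReal.ofReal (δ ^ (1 / p)) := by
    refine volume_le_of_forall_sub_le fun s hs t ht hst => ?_
    have hgap := resonance_gap hp hs.2 hst (sub_nonneg.1 ht.1.2.1)
    have hpow : (t - s) ^ p ≤ δ := by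
      have hs' := abs_le.1 hs.1.2.2
      have ht' := abs_le.1 ht.1.2.2
      linarith
    rw [one_div, Real.le_rpow_inv_iff_of_pos (sub_nonneg.2 hst) _ (by linarith)]
    · exact hpow
    · exact (Real.rpow_nonneg (sub_nonneg.2 hst) p).trans hpow
  have hcover : S ⊆ U ∪ (fun x => q - x) ⁻¹' U := by
    intro x hx
    rcases le_total (q / 2) x with h | h
    · exact Or.inl ⟨hx, h⟩
    · refine Or.inr ⟨⟨hx.2.1, ?_, ?_⟩, ?_⟩
      · simpa using hx.1
      · simpa [add_comm] using hx.2.2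
      · simp only [Set.mem_Ici]
        linarith
  have hrefl : volume ((fun x => q - x) ⁻¹' U) = volume U :=
    MeasurePreserving.measure_preimage_equiv (f := MeasurableEquiv.subLeft q)
      (volume.measurePreserving_sub_left q) U
  calc volume S ≤ volume U + volume ((fun x => q - x) ⁻¹' U) :=
        (measure_mono hcover).trans (measure_union_le _ _)
    _ = 2 * volume U := by
        rw [hrefl, two_mul]
    _ ≤ _ := by gcongr

end Resonance

section GraphStrip

variable {X : Type*} [MeasureSpace X] {I : Set X} {h : X → ℝ} {L : ℝ}

/-- The vertical neighbourhood of radius `L` of the graph of `h` over `I`. -/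
def graphStrip (I : Set X) (h : X → ℝ) (L : ℝ) : Set (X × ℝ) :=
  {r | r.1 ∈ I ∧ |r.2 - h r.1| ≤ L}

theorem measurableSet_graphStrip (hI : MeasurableSet I) (hh : Measurable h) :
    MeasurableSet (graphStrip I h L) :=
  (measurable_fst hI).inter
    (measurableSet_le (measurable_snd.sub (hh.comp measurable_fst)).abs measurable_const)

/-- By Fubini: a vertical section of the fibre lies in an interval of length `2 * L`, and is empty
unless its abscissa satisfies the conditions on the right. -/
theorem volume_sumFiber_graphStrip_le [AddCommGroup X] [MeasurableSub X] (hI : MeasurableSet I)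
    (hh : Measurable h) (q : X × ℝ) :
    volume (sumFiber (graphStrip I h L) (graphStrip I h L) q) ≤ ENNReal.ofReal (2 * L) *
      volume {x | x ∈ I ∧ q.1 - x ∈ I ∧ |h x + h (q.1 - x) - q.2| ≤ 2 * L} := by
  set S := {x | x ∈ I ∧ q.1 - x ∈ I ∧ |h x + h (q.1 - x) - q.2| ≤ 2 * L}
  have hS : MeasurableSet S :=
    hI.inter ((measurable_const_sub q.1 hI).inter (measurableSet_le
      ((hh.add (hh.comp (measurable_const_sub q.1))).sub_const q.2).abs measurable_const))
  have hsub : Measurable fun r : X × ℝ => q - r :=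
    (measurable_fst.const_sub q.1).prodMk (measurable_snd.const_sub q.2)
  have hfiber : MeasurableSet (sumFiber (graphStrip I h L) (graphStrip I h L) q) :=
    (measurableSet_graphStrip hI hh).inter (hsub (measurableSet_graphStrip hI hh))
  rw [Measure.volume_eq_prod, Measure.prod_apply hfiber, ← lintegral_indicator_const hS]
  refine lintegral_mono fun x => ?_
  by_cases hx : x ∈ S
  · rw [Set.indicator_of_mem hx]
    calc _ ≤ volume (Set.Icc (h x - L) (h x + L)) := by
          refine measure_mono fun y hy => ?_
          have hy' := abs_le.1 hy.1.2
          constructor <;> linarith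
      _ = _ := by
          rw [Real.volume_Icc]
          ring_nf
  · rw [Set.indicator_of_notMem hx]
    refine (measure_mono_null (fun y hy => hx ?_) measure_empty).le
    have h1 := abs_le.1 hy.1.2
    have h2 := abs_le.1 hy.2.2
    simp only [Prod.fst_sub, Prod.snd_sub] at h1 h2
    exact ⟨hy.1.1, hy.2.1, abs_le.2 ⟨by linarith, by linarith⟩⟩

end GraphStrip

section Modulation

variable {a : ℝ}

theorem measurable_disp (a : ℝ) : Measurable (disp a) := by
  unfold disp
  fun_prop

theorem disp_neg (a ξ : ℝ) : disp a (-ξ) = -disp a ξ := by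
  rw [disp, disp, abs_neg, neg_mul]

theorem disp_of_nonneg {ξ : ℝ} (ha : 0 ≤ a) (hξ : 0 ≤ ξ) : disp a ξ = ξ ^ (2 + a) := by
  have hpow := Real.rpow_add_of_nonneg hξ zero_le_one (by linarith : 0 ≤ 1 + a)
  rw [disp, abs_of_nonneg hξ, show 2 + a = 1 + (1 + a) by ring, hpow, Real.rpow_one]

/-- The modulation `λ - ω(ξ)` of a frequency `(ξ, λ)`. -/
def modulation (a : ℝ) (r : ℝ × ℝ) : ℝ := r.2 - disp a r.1

theorem measurable_modulation (a : ℝ) : Measurable (modulation a) :=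
  measurable_snd.sub ((measurable_disp a).comp measurable_fst)

theorem modulation_neg (a : ℝ) (r : ℝ × ℝ) : modulation a (-r) = -modulation a r := by
  rw [modulation, modulation, Prod.fst_neg, Prod.snd_neg, disp_neg]
  ring

/-- The frequencies `(ξ, λ)` with `0 ≤ ξ` and modulation at most `L`. The sign is fixed because
`ω(ξ) + ω(q - ξ)` controls `ξ` only where `ξ` and `q - ξ` have the same sign. -/
def halfBand (a L : ℝ) : Set (ℝ × ℝ) := graphStrip (Set.Ici 0) (disp a) L

theorem measurableSet_halfBand (a L : ℝ) : MeasurableSet (halfBand a L) :=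
  measurableSet_graphStrip measurableSet_Ici (measurable_disp a)

theorem mem_halfBand_or_neg_mem {L : ℝ} {r : ℝ × ℝ} (hr : |modulation a r| ≤ L) :
    r ∈ halfBand a L ∨ -r ∈ halfBand a L := by
  rcases le_total 0 r.1 with h | h
  · exact Or.inl ⟨h, hr⟩
  · refine Or.inr ⟨neg_nonneg.2 h, ?_⟩
    rw [← abs_neg, ← modulation_neg] at hr
    exact hr

theorem volume_sumFiber_halfBand_le {L : ℝ} (ha : 0 ≤ a) (hL : 0 < L) (q : ℝ × ℝ) :
    volume (sumFiber (halfBand a L) (halfBand a L) q) ≤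
      ENNReal.ofReal (2 * (2 * L) ^ ((3 + a) / (2 + a))) := by
  have hres : {x | x ∈ Set.Ici 0 ∧ q.1 - x ∈ Set.Ici 0 ∧
      |disp a x + disp a (q.1 - x) - q.2| ≤ 2 * L} ⊆
      {x | 0 ≤ x ∧ 0 ≤ q.1 - x ∧ |x ^ (2 + a) + (q.1 - x) ^ (2 + a) - q.2| ≤ 2 * L} := by
    rintro x ⟨hx, hqx, h⟩
    rw [disp_of_nonneg ha hx, disp_of_nonneg ha hqx] at h
    exact ⟨hx, hqx, h⟩
  calc volume (sumFiber (halfBand a L) (halfBand a L) q)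
      ≤ ENNReal.ofReal (2 * L) * (2 * ENNReal.ofReal ((2 * L) ^ (1 / (2 + a)))) :=
        (volume_sumFiber_graphStrip_le measurableSet_Ici (measurable_disp a) q).trans
          (by
            gcongr
            exact (measure_mono hres).trans (volume_resonance_le (by linarith) q.1 q.2 (2 * L)))
    _ = ENNReal.ofReal (2 * ((2 * L) ^ (1 : ℝ) * (2 * L) ^ (1 / (2 + a)))) := by
        rw [mul_left_comm, ← ENNReal.ofReal_ofNat 2, ← ENNReal.ofReal_mul (by positivity),
          ← ENNReal.ofReal_mul two_pos.le, Real.rpow_one]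
    _ = _ := by
        rw [← Real.rpow_add (by positivity)]
        congr 3
        field_simp
        ring

end Modulation

/-! ### Pieces of bounded modulation -/

/-- The Euclidean frequency plane. The norm of `ℝ × ℝ` is the supremum norm, which comes from no
inner product, so `𝓕` is not available there. -/
abbrev Plane := WithLp 2 (ℝ × ℝ)

/-- The frequency `(ξ, λ) = 2πw` of the character `e^{2πi⟨w, ·⟩}`, in which Mathlib's Fourier
transform is written. -/
def frequency : Plane →L[ℝ] ℝ × ℝ :=
  (2 * Real.pi) • (WithLp.prodContinuousLinearEquiv 2 ℝ ℝ ℝ : Plane →L[ℝ] ℝ × ℝ)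

theorem frequency_apply (w : Plane) : frequency w = (2 * Real.pi) • w.ofLp := rfl

theorem volume_frequency_preimage (S : Set (ℝ × ℝ)) :
    volume (frequency ⁻¹' S) = ENNReal.ofReal (((2 * Real.pi) ^ 2)⁻¹) * volume S := by
  have hpi : 2 * Real.pi ≠ 0 := by positivity
  have hpre : volume (frequency ⁻¹' S) = volume (((2 * Real.pi) • ·) ⁻¹' S) :=
    (WithLp.volume_preserving_symm_measurableEquiv_toLp_prod ℝ ℝ).measure_preimage_equiv
      (((2 * Real.pi) • ·) ⁻¹' S)
  rw [hpre, Measure.addHaar_preimage_smul _ hpi, Module.finrank_prod, Module.finrank_self,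
    abs_of_pos (by positivity)]

theorem integral_comp_frequency (F : ℝ × ℝ → ℝ) :
    ∫ w, F (frequency w) = ((2 * Real.pi) ^ 2)⁻¹ * ∫ p, F p := by
  have h := Measure.integral_comp_smul volume F (2 * Real.pi)
  rw [Module.finrank_prod, Module.finrank_self, abs_of_pos (by positivity), smul_eq_mul] at h
  rw [← h]
  exact (WithLp.volume_preserving_symm_measurableEquiv_toLp_prod ℝ ℝ).integral_comp'
    fun p => F ((2 * Real.pi) • p)

theorem volume_frequency_preimage_le (S : Set (ℝ × ℝ)) :
    volume (frequency ⁻¹' S) ≤ volume S := by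
  rw [volume_frequency_preimage]
  refine mul_le_of_le_one_left zero_le (ENNReal.ofReal_le_one.2 ?_)
  exact inv_le_one_of_one_le₀ (one_le_pow₀ (by linarith [Real.pi_gt_three]))

theorem volume_sumFiber_frequency_preimage_le (S : Set (ℝ × ℝ)) (w : Plane) :
    volume (sumFiber (frequency ⁻¹' S) (frequency ⁻¹' S) w) ≤
      volume (sumFiber S S (frequency w)) := by
  have h := sumFiber_preimage (frequency : Plane →+ ℝ × ℝ) S S w
  exact (measure_mono h.le).trans (volume_frequency_preimage_le _)

theorem eLpNorm_fourier_four_le_of_modulation_le {a L : ℝ} (ha : 0 ≤ a) (hL : 0 < L)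
    {G : Plane → ℂ} (h1 : Integrable G) (h2 : MemLp G 2)
    (hG : ∀ w, G w ≠ 0 → |modulation a (frequency w)| ≤ L) :
    eLpNorm (𝓕 G) 4 ≤ ENNReal.ofReal (2 ^ (5 / 4 : ℝ) *
      (2 * L) ^ ((3 + a) / (4 * (2 + a)))) * eLpNorm G 2 := by
  set A := halfBand a L
  have hA : ∀ w, volume (sumFiber (frequency ⁻¹' A) (frequency ⁻¹' A) w) ≤
      ENNReal.ofReal (2 * (2 * L) ^ ((3 + a) / (2 + a))) := fun w =>
    (volume_sumFiber_frequency_preimage_le A w).trans (volume_sumFiber_halfBand_le ha hL _)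
  have hnegA : ∀ w, volume (sumFiber (frequency ⁻¹' (-A)) (frequency ⁻¹' (-A)) w) ≤
      ENNReal.ofReal (2 * (2 * L) ^ ((3 + a) / (2 + a))) := fun w =>
    (volume_sumFiber_frequency_preimage_le (-A) w).trans
      ((measure_sumFiber_neg volume A A _).trans_le (volume_sumFiber_halfBand_le ha hL _))
  have hsupp : G.support ⊆ frequency ⁻¹' A ∪ frequency ⁻¹' (-A) := fun w hw =>
    mem_halfBand_or_neg_mem (hG w hw)
  refine (eLpNorm_fourier_four_le_of_support_subset_union h1 h2 ENNReal.ofReal_ne_top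
    (frequency.continuous.measurable (measurableSet_halfBand a L)) hsupp hA hnegA).trans_eq ?_
  congr 1
  rw [ENNReal.ofReal_rpow_of_nonneg (by positivity) (by norm_num), ← ENNReal.ofReal_ofNat 2,
    ← ENNReal.ofReal_mul two_pos.le, Real.mul_rpow two_pos.le (by positivity),
    ← Real.rpow_mul (by positivity), ← mul_assoc, ← Real.rpow_one_add' two_pos.le (by norm_num)]
  norm_num only
  congr 3
  field_simp

/-! ### Dyadic summation -/

namespace DyadicCutoffs

variable {χ₀ χ : ℝ → ℝ} (hχ : DyadicCutoffs χ₀ χ)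
include hχ

theorem chiJ_nonneg (j : ℕ) (z : ℝ) : 0 ≤ chiJ χ₀ χ j z := by
  unfold chiJ
  split_ifs
  exacts [(hχ.mem0 z).1, (hχ.mem1 _).1]

theorem chiJ_le_one (j : ℕ) (z : ℝ) : chiJ χ₀ χ j z ≤ 1 := by
  unfold chiJ
  split_ifs
  exacts [(hχ.mem0 z).2, (hχ.mem1 _).2]

theorem measurable_chiJ (j : ℕ) : Measurable (chiJ χ₀ χ j) := by
  have h0 := hχ.smooth0.continuous.measurable
  have h1 := hχ.smooth1.continuous.measurable
  unfold chiJ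
  split_ifs
  · exact h0
  · exact h1.comp (measurable_const_mul _)

theorem two_pow_lt_and_lt_of_chiJ_ne_zero {j : ℕ} (hj : j ≠ 0) {z : ℝ} (hz : chiJ χ₀ χ j z ≠ 0) :
    2 ^ j < 2 * |z| ∧ |z| < 2 * 2 ^ j := by
  rw [chiJ, if_neg hj] at hz
  have h := hχ.supp1 _ hz
  rw [abs_mul, Real.rpow_neg two_pos.le, Real.rpow_natCast, abs_of_pos (by positivity),
    inv_mul_eq_div, lt_div_iff₀ (by positivity), div_lt_iff₀ (by positivity)] at h
  exact ⟨by linarith [h.1], h.2⟩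

theorem abs_le_of_chiJ_ne_zero {j : ℕ} {z : ℝ} (hz : chiJ χ₀ χ j z ≠ 0) : |z| ≤ 2 * 2 ^ j := by
  rcases eq_or_ne j 0 with rfl | hj
  · rw [pow_zero, mul_one]
    exact not_lt.1 fun h => hz (hχ.supp0 z h)
  · exact (hχ.two_pow_lt_and_lt_of_chiJ_ne_zero hj hz).2.le

theorem chiJ_le_inv_sq_mul (j : ℕ) (z : ℝ) :
    chiJ χ₀ χ j z ≤ ((2 : ℝ) ^ j)⁻¹ ^ 2 * (1 + 4 * z ^ 2) := by
  by_cases hz : chiJ χ₀ χ j z = 0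
  · rw [hz]
    positivity
  refine (hχ.chiJ_le_one j z).trans ?_
  rw [inv_pow, inv_mul_eq_div, one_le_div (by positivity)]
  rcases eq_or_ne j 0 with rfl | hj
  · rw [pow_zero, one_pow]
    linarith [sq_nonneg z]
  · have h := pow_le_pow_left₀ (by positivity) (hχ.two_pow_lt_and_lt_of_chiJ_ne_zero hj hz).1.le 2
    rw [mul_pow, sq_abs] at h
    linarith

/-- A divergent `∑'` has the value `0`, so the partition hypothesis carries summability. -/
theorem hasSum_chiJ (z : ℝ) : HasSum (fun j => chiJ χ₀ χ j z) 1 := by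
  have hs : Summable fun j => chiJ χ₀ χ j z := by
    by_contra hn
    exact zero_ne_one ((tsum_eq_zero_of_not_summable hn).symm.trans (hχ.partition z))
  exact hχ.partition z ▸ hs.hasSum

end DyadicCutoffs

section Summation

variable {α E : Type*} [MeasurableSpace α] {μ : Measure α} [NormedAddCommGroup E]

/-- Fatou's lemma passes the triangle inequality for the partial sums to the limit. -/
theorem eLpNorm_le_tsum_eLpNorm {p : ℝ≥0∞} (hp : 1 ≤ p) {f : ℕ → α → E} {g : α → E}
    (hf : ∀ n, AEStronglyMeasurable (f n) μ) (hg : ∀ᵐ x ∂μ, HasSum (fun n => f n x) (g x)) :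
    eLpNorm g p μ ≤ ∑' n, eLpNorm (f n) p μ := by
  have hlim : ∀ᵐ x ∂μ, Filter.Tendsto (fun n => (∑ j ∈ Finset.range n, f j) x) Filter.atTop
      (nhds (g x)) := by
    filter_upwards [hg] with x hx
    simpa only [Finset.sum_apply] using hx.tendsto_sum_nat
  refine (Lp.eLpNorm_lim_le_liminf_eLpNorm
    (fun n => Finset.aestronglyMeasurable_sum _ fun j _ => hf j) g hlim).trans ?_
  refine Filter.liminf_le_of_le (by isBoundedDefault) fun c hc => ?_
  obtain ⟨n, hn⟩ := hc.exists
  exact hn.trans ((eLpNorm_sum_le (fun j _ => hf j) hp).trans (ENNReal.sum_le_tsum _))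

theorem memLp_smul_of_nonneg_of_le_one [NormedSpace ℝ E] {ρ : α → ℝ} {f : α → E} {p : ℝ≥0∞}
    (hf : MemLp f p μ) (hρ : AEStronglyMeasurable ρ μ) (hρ0 : ∀ x, 0 ≤ ρ x)
    (hρ1 : ∀ x, ρ x ≤ 1) : MemLp (fun x => ρ x • f x) p μ :=
  hf.mono (hρ.smul hf.aestronglyMeasurable) (.of_forall fun x => by
    rw [norm_smul, Real.norm_of_nonneg (hρ0 x)]
    exact mul_le_of_le_one_left (norm_nonneg _) (hρ1 x))

theorem eLpNorm_two_smul_le [NormedSpace ℝ E] {ρ : α → ℝ} {f : α → E} (hf : MemLp f 2 μ)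
    (hρ : AEStronglyMeasurable ρ μ) (hρ0 : ∀ x, 0 ≤ ρ x) (hρ1 : ∀ x, ρ x ≤ 1) :
    eLpNorm (fun x => ρ x • f x) 2 μ ≤
      ENNReal.ofReal ((∫ x, ρ x * ‖f x‖ ^ 2 ∂μ) ^ (1 / 2 : ℝ)) := by
  have hρf := memLp_smul_of_nonneg_of_le_one hf hρ hρ0 hρ1
  have hint : Integrable (fun x => ρ x * ‖f x‖ ^ 2) μ :=
    memLp_one_iff_integrable.1 (memLp_smul_of_nonneg_of_le_one
      (memLp_one_iff_integrable.2 (hf.integrable_norm_pow two_ne_zero)) hρ hρ0 hρ1)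
  have hle : ∀ x, ‖ρ x • f x‖ ^ 2 ≤ ρ x * ‖f x‖ ^ 2 := fun x => by
    rw [norm_smul, Real.norm_of_nonneg (hρ0 x), mul_pow]
    gcongr
    exact pow_le_of_le_one (hρ0 x) (hρ1 x) two_ne_zero
  rw [hρf.eLpNorm_eq_integral_rpow_norm two_ne_zero ENNReal.ofNat_ne_top]
  simp only [ENNReal.toReal_ofNat, Real.rpow_two, ← one_div]
  exact ENNReal.ofReal_le_ofReal (Real.rpow_le_rpow (by positivity)
    (integral_mono (hρf.integrable_norm_pow two_ne_zero) hint hle) (by norm_num))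

theorem hasSum_fourier_smul {ι V F : Type*} [Countable ι] [NormedAddCommGroup V]
    [InnerProductSpace ℝ V] [FiniteDimensional ℝ V] [MeasurableSpace V] [BorelSpace V]
    [NormedAddCommGroup F] [NormedSpace ℂ F] {ρ : ι → V → ℝ} {f : V → F} (hf : Integrable f)
    (hρ : ∀ i, AEStronglyMeasurable (ρ i)) (hρ0 : ∀ i v, 0 ≤ ρ i v)
    (hsum : ∀ v, HasSum (fun i => ρ i v) 1) (x : V) :
    HasSum (fun i => 𝓕 (fun v => ρ i v • f v) x) (𝓕 f x) := by
  simp only [Real.fourier_eq]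
  refine hasSum_integral_of_dominated_convergence (fun i v => ρ i v * ‖f v‖) (fun i => ?_)
    (fun i => .of_forall fun v => ?_) (.of_forall fun v => ((hsum v).mul_right _).summable) ?_
    (.of_forall fun v => ?_)
  · have h := (hρ i).smul ((Real.fourierIntegral_convergent_iff x).2 hf).aestronglyMeasurable
    exact h.congr (.of_forall fun v => smul_comm _ _ _)
  · rw [Circle.norm_smul, norm_smul, Real.norm_of_nonneg (hρ0 i v)]
  · simpa only [tsum_mul_right, (hsum _).tsum_eq, one_mul] using hf.norm
  · simpa only [one_smul] using
      ((hsum v).smul_const (f v)).const_smul (Real.fourierChar (-inner ℝ v x))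

end Summation

theorem summable_two_rpow_mul_rpow_half {e : ℕ → ℝ} {b B : ℝ} (hb : b < 1) (he0 : ∀ j, 0 ≤ e j)
    (he : ∀ j, e j ≤ ((2 : ℝ) ^ j)⁻¹ ^ 2 * B) :
    Summable fun j : ℕ => (2 : ℝ) ^ (j * b) * e j ^ (1 / 2 : ℝ) := by
  have hB : 0 ≤ B := by simpa using (he0 0).trans (he 0)
  have hgeom : Summable fun j : ℕ => ((2 : ℝ) ^ (b - 1)) ^ j * B ^ (1 / 2 : ℝ) :=
    (summable_geometric_of_lt_one (by positivity)
      (Real.rpow_lt_one_of_one_lt_of_neg one_lt_two (by linarith))).mul_right _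
  refine hgeom.of_nonneg_of_le
    (fun j => mul_nonneg (by positivity) (Real.rpow_nonneg (he0 j) _)) fun j => ?_
  calc (2 : ℝ) ^ (j * b) * e j ^ (1 / 2 : ℝ)
      ≤ (2 : ℝ) ^ (j * b) * (((2 : ℝ) ^ j)⁻¹ ^ 2 * B) ^ (1 / 2 : ℝ) := by
        gcongr
        exacts [he0 j, he j]
    _ = (2 : ℝ) ^ (j * b) * ((2 : ℝ) ^ j)⁻¹ * B ^ (1 / 2 : ℝ) := by
        rw [Real.mul_rpow (by positivity) hB, ← Real.sqrt_eq_rpow (((2 : ℝ) ^ j)⁻¹ ^ 2),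
          Real.sqrt_sq (by positivity), ← mul_assoc]
    _ = ((2 : ℝ) ^ (b - 1)) ^ j * B ^ (1 / 2 : ℝ) := by
        rw [← Real.rpow_natCast, ← Real.rpow_natCast, ← Real.rpow_neg two_pos.le,
          ← Real.rpow_add two_pos, ← Real.rpow_mul two_pos.le]
        ring_nf

theorem abs_modulation_le {a R : ℝ} (ha : 0 ≤ 1 + a) (hR : 1 ≤ R) {r : ℝ × ℝ} (hr : ‖r‖ ≤ R) :
    |modulation a r| ≤ 2 * R ^ (2 + a) := by
  have hR0 : 0 < R := one_pos.trans_le hR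
  have h1 : |r.1| ≤ R := (norm_fst_le r).trans hr
  have h2 : |r.2| ≤ R := (norm_snd_le r).trans hr
  have hdisp : |disp a r.1| ≤ R ^ (2 + a) := by
    rw [disp, abs_mul, abs_of_nonneg (by positivity : 0 ≤ |r.1| ^ (1 + a)),
      show 2 + a = 1 + (1 + a) by ring, Real.rpow_add hR0, Real.rpow_one]
    gcongr
  have hR' : R ≤ R ^ (2 + a) := Real.self_le_rpow_of_one_le hR (by linarith)
  exact (abs_sub _ _).trans (by linarith)

theorem memLp_modulation_smul {a : ℝ} (ha : 0 ≤ 1 + a) (Φ : 𝓢(Plane, ℂ)) (p : ℝ≥0∞) :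
    MemLp (fun w => modulation a (frequency w) • Φ w) p := by
  have hpi : 1 ≤ 2 * Real.pi := by linarith [Real.pi_gt_three]
  have hgrowth := Function.hasTemperateGrowth_one_add_norm_sq_rpow Plane ((2 + a) / 2)
  set Ψ : 𝓢(Plane, ℂ) :=
    SchwartzMap.smulLeftCLM ℂ (fun w : Plane => (1 + ‖w‖ ^ 2) ^ ((2 + a) / 2)) Φ
  have hm := ((measurable_modulation a).comp frequency.continuous.measurable).aestronglyMeasurable
    (μ := volume)
  refine MemLp.of_le_mul (g := Ψ) (c := 2 * (2 * Real.pi) ^ (2 + a)) (Ψ.memLp p)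
    (hm.smul Φ.continuous.aestronglyMeasurable) (.of_forall fun w => ?_)
  set R := (1 + ‖w‖ ^ 2) ^ (1 / 2 : ℝ) with hRdef
  have hR : 1 ≤ R := Real.one_le_rpow (by linarith [sq_nonneg ‖w‖]) (by norm_num)
  have hwR : ‖w‖ ≤ R :=
    (Real.le_sqrt_of_sq_le (by linarith)).trans_eq (Real.sqrt_eq_rpow (1 + ‖w‖ ^ 2))
  have hfreq : ‖frequency w‖ ≤ 2 * Real.pi * R := by
    rw [frequency_apply, norm_smul, Real.norm_of_nonneg (by positivity)]
    gcongr
    exact (max_le (WithLp.norm_fst_le ℝ w) (WithLp.norm_snd_le ℝ w)).trans hwR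
  have hmod := abs_modulation_le ha (one_le_mul_of_one_le_of_one_le hpi hR) hfreq
  rw [Real.mul_rpow (by positivity) (by positivity), ← mul_assoc, hRdef,
    ← Real.rpow_mul (by positivity), one_div_mul_eq_div] at hmod
  rw [SchwartzMap.smulLeftCLM_apply_apply hgrowth, norm_smul, norm_smul, ← mul_assoc,
    Real.norm_of_nonneg (by positivity : 0 ≤ (1 + ‖w‖ ^ 2) ^ ((2 + a) / 2)), Real.norm_eq_abs]
  exact mul_le_mul_of_nonneg_right hmod (norm_nonneg _)

section Band

variable {a : ℝ} {χ₀ χ : ℝ → ℝ} (hχ : DyadicCutoffs χ₀ χ)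

/-- The dyadic cutoff `χ_j(λ - ω(ξ))`, in the frequency variable `w` of Mathlib's Fourier
transform. -/
def bandCutoff (a : ℝ) (χ₀ χ : ℝ → ℝ) (j : ℕ) (w : Plane) : ℝ :=
  chiJ χ₀ χ j (modulation a (frequency w))

/-- The squared `L²` mass of `Φ` in the `j`-th dyadic modulation band. -/
def bandEnergy (a : ℝ) (χ₀ χ : ℝ → ℝ) (Φ : Plane → ℂ) (j : ℕ) : ℝ :=
  ∫ w, bandCutoff a χ₀ χ j w * ‖Φ w‖ ^ 2

include hχ

theorem measurable_bandCutoff (a : ℝ) (j : ℕ) : Measurable (bandCutoff a χ₀ χ j) :=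
  (hχ.measurable_chiJ j).comp
    ((measurable_modulation a).comp frequency.continuous.measurable)

theorem bandCutoff_nonneg (j : ℕ) (w : Plane) : 0 ≤ bandCutoff a χ₀ χ j w :=
  hχ.chiJ_nonneg _ _

theorem bandCutoff_le_one (j : ℕ) (w : Plane) : bandCutoff a χ₀ χ j w ≤ 1 :=
  hχ.chiJ_le_one _ _

theorem memLp_bandCutoff_smul (Φ : 𝓢(Plane, ℂ)) (j : ℕ) (p : ℝ≥0∞) :
    MemLp (fun w => bandCutoff a χ₀ χ j w • Φ w) p :=
  memLp_smul_of_nonneg_of_le_one (Φ.memLp p) (measurable_bandCutoff hχ a j).aestronglyMeasurable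
    (bandCutoff_nonneg hχ j) (bandCutoff_le_one hχ j)

theorem bandEnergy_nonneg (Φ : Plane → ℂ) (j : ℕ) : 0 ≤ bandEnergy a χ₀ χ Φ j :=
  integral_nonneg fun _ => mul_nonneg (bandCutoff_nonneg hχ _ _) (by positivity)

theorem bandEnergy_le (ha : 0 ≤ 1 + a) (Φ : 𝓢(Plane, ℂ)) (j : ℕ) :
    bandEnergy a χ₀ χ Φ j ≤ ((2 : ℝ) ^ j)⁻¹ ^ 2 *
      ∫ w, (1 + 4 * modulation a (frequency w) ^ 2) * ‖Φ w‖ ^ 2 := by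
  have hint : Integrable fun w => (1 + 4 * modulation a (frequency w) ^ 2) * ‖Φ w‖ ^ 2 := by
    have h1 := (Φ.memLp 2).integrable_norm_pow two_ne_zero
    have h2 := (memLp_modulation_smul ha Φ 2).integrable_norm_pow two_ne_zero
    refine (h1.add (h2.const_mul 4)).congr (.of_forall fun w => ?_)
    simp only [Pi.add_apply, norm_smul, mul_pow, Real.norm_eq_abs, sq_abs]
    ring
  rw [← integral_const_mul]
  refine integral_mono_of_nonneg
    (.of_forall fun w => mul_nonneg (bandCutoff_nonneg hχ j w) (by positivity)) (hint.const_mul _)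
    (.of_forall fun w => ?_)
  exact (mul_le_mul_of_nonneg_right (hχ.chiJ_le_inv_sq_mul j _) (by positivity)).trans_eq
    (mul_assoc _ _ _)

theorem eLpNorm_fourier_band_le (ha : 0 ≤ a) (Φ : 𝓢(Plane, ℂ)) (j : ℕ) :
    eLpNorm (𝓕 fun w => bandCutoff a χ₀ χ j w • Φ w) 4 ≤
      ENNReal.ofReal (2 ^ (5 / 4 : ℝ) * 4 ^ ((3 + a) / (4 * (2 + a))) *
        (2 ^ (j * ((3 + a) / (4 * (2 + a)))) * bandEnergy a χ₀ χ Φ j ^ (1 / 2 : ℝ))) := by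
  have hpiece := eLpNorm_fourier_four_le_of_modulation_le ha (L := 2 * 2 ^ j) (by positivity)
    (memLp_one_iff_integrable.1 (memLp_bandCutoff_smul hχ Φ j 1)) (memLp_bandCutoff_smul hχ Φ j 2)
    fun w hw => hχ.abs_le_of_chiJ_ne_zero (left_ne_zero_of_smul hw)
  have htwo := eLpNorm_two_smul_le (Φ.memLp 2)
    (measurable_bandCutoff hχ a j).aestronglyMeasurable
    (bandCutoff_nonneg hχ j) (bandCutoff_le_one hχ j)
  refine hpiece.trans ((mul_le_mul_right htwo _).trans_eq ?_)
  rw [← ENNReal.ofReal_mul (by positivity), show (2 : ℝ) * (2 * 2 ^ j) = 4 * 2 ^ j by ring,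
    Real.mul_rpow (by positivity) (by positivity), ← Real.rpow_natCast_mul two_pos.le]
  simp only [mul_assoc, bandEnergy]

theorem eLpNorm_fourier_four_le_tsum_bandEnergy (ha : 0 ≤ a) (Φ : 𝓢(Plane, ℂ)) :
    eLpNorm (𝓕 (Φ : Plane → ℂ)) 4 ≤
      ENNReal.ofReal (2 ^ (5 / 4 : ℝ) * 4 ^ ((3 + a) / (4 * (2 + a))) *
        ∑' j : ℕ, 2 ^ (j * ((3 + a) / (4 * (2 + a)))) * bandEnergy a χ₀ χ Φ j ^ (1 / 2 : ℝ)) := by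
  have hb : (3 + a) / (4 * (2 + a)) < 1 := by
    rw [div_lt_one (by positivity)]
    linarith
  have henergy := bandEnergy_nonneg (a := a) hχ Φ
  have hsummable := summable_two_rpow_mul_rpow_half hb henergy
    (bandEnergy_le hχ (by linarith) Φ)
  have hcont : ∀ j, Continuous (𝓕 fun w => bandCutoff a χ₀ χ j w • Φ w) := fun j =>
    continuous_fourier (memLp_one_iff_integrable.1 (memLp_bandCutoff_smul hχ Φ j 1))
  have hsum : ∀ x, HasSum (fun j => 𝓕 (fun w => bandCutoff a χ₀ χ j w • Φ w) x)
      (𝓕 (Φ : Plane → ℂ) x) :=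
    hasSum_fourier_smul Φ.integrable
      (fun j => (measurable_bandCutoff hχ a j).aestronglyMeasurable) (bandCutoff_nonneg hχ)
      fun w => hχ.hasSum_chiJ _
  refine (eLpNorm_le_tsum_eLpNorm (by norm_num) (fun j => (hcont j).aestronglyMeasurable)
    (.of_forall hsum)).trans ((ENNReal.tsum_le_tsum (eLpNorm_fourier_band_le hχ ha Φ)).trans_eq ?_)
  rw [← tsum_mul_left, ENNReal.ofReal_tsum_of_nonneg
    (fun j => mul_nonneg (by positivity) (mul_nonneg (by positivity)
      (Real.rpow_nonneg (henergy j) _))) (hsummable.mul_left _)]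

end Band

/-! ### Return to the given normalization -/

/-- A Schwartz function on `ℝ × ℝ`, regarded as one on the Euclidean plane. -/
def toPlane (f : 𝓢(ℝ × ℝ, ℂ)) : 𝓢(Plane, ℂ) :=
  SchwartzMap.compCLMOfContinuousLinearEquiv ℂ (WithLp.prodContinuousLinearEquiv 2 ℝ ℝ ℝ) f

theorem coe_toPlane (f : 𝓢(ℝ × ℝ, ℂ)) : ⇑(toPlane f) = f ∘ WithLp.ofLp := rfl

theorem FT2_frequency (f : 𝓢(ℝ × ℝ, ℂ)) (w : Plane) :
    FT2 (fun p => f p) (frequency w).1 (frequency w).2 = (𝓕⁻ (toPlane f) : 𝓢(Plane, ℂ)) w := by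
  rw [SchwartzMap.fourierInv_coe, Real.fourierInv_eq', FT2,
    ← (WithLp.volume_preserving_symm_measurableEquiv_toLp_prod ℝ ℝ).integral_comp']
  refine integral_congr_ae (.of_forall fun v => ?_)
  have hinner : inner ℝ v w = v.ofLp.1 * w.ofLp.1 + v.ofLp.2 * w.ofLp.2 := by
    simp only [WithLp.prod_inner_apply, RCLike.inner_apply, conj_trivial]
    ring
  have hphase : v.ofLp.1 * (frequency w).1 + v.ofLp.2 * (frequency w).2 =
      2 * Real.pi * inner ℝ v w := by
    simp only [frequency_apply, Prod.smul_fst, Prod.smul_snd, smul_eq_mul, hinner]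
    ring
  change cexp (I * ((v.ofLp.1 * (frequency w).1 + v.ofLp.2 * (frequency w).2 : ℝ) : ℂ)) *
    f v.ofLp = _
  rw [hphase, mul_comm I]
  rfl

theorem bandEnergy_fourierInv (a : ℝ) (χ₀ χ : ℝ → ℝ) (f : 𝓢(ℝ × ℝ, ℂ)) (j : ℕ) :
    bandEnergy a χ₀ χ (𝓕⁻ (toPlane f) : 𝓢(Plane, ℂ)) j = ((2 * Real.pi) ^ 2)⁻¹ *
      ∫ p : ℝ × ℝ, chiJ χ₀ χ j (modulation a p) * ‖FT2 (fun p => f p) p.1 p.2‖ ^ 2 := by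
  rw [← integral_comp_frequency]
  simp only [FT2_frequency, bandEnergy, bandCutoff]

theorem Xnorm_eq_tsum_bandEnergy {χ₀ χ : ℝ → ℝ} (hχ : DyadicCutoffs χ₀ χ) (a b : ℝ)
    (f : 𝓢(ℝ × ℝ, ℂ)) :
    Xnorm a χ₀ χ b 0 (fun p => f p) = 2 * Real.pi * ∑' j : ℕ, 2 ^ (j * b) *
      bandEnergy a χ₀ χ (𝓕⁻ (toPlane f) : 𝓢(Plane, ℂ)) j ^ (1 / 2 : ℝ) := by
  have hpi : 0 < 2 * Real.pi := by positivity
  rw [Xnorm, ← tsum_mul_left]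
  refine tsum_congr fun j => ?_
  have hsqrt : ((2 * Real.pi) ^ 2) ^ (1 / 2 : ℝ) = 2 * Real.pi := by
    rw [← Real.sqrt_eq_rpow, Real.sqrt_sq hpi.le]
  have henergy : ∫ p : ℝ × ℝ, chiJ χ₀ χ j (p.2 - disp a p.1) * (1 + |p.1|) ^ (2 * (0 : ℝ)) *
      ‖FT2 (fun p => f p) p.1 p.2‖ ^ 2 =
      (2 * Real.pi) ^ 2 * bandEnergy a χ₀ χ (𝓕⁻ (toPlane f) : 𝓢(Plane, ℂ)) j := by
    rw [bandEnergy_fourierInv, mul_inv_cancel_left₀ (by positivity)]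
    simp only [mul_zero, Real.rpow_zero, mul_one, modulation]
  rw [henergy, Real.mul_rpow (by positivity) (bandEnergy_nonneg hχ _ j), hsqrt]
  ring

theorem ofReal_Lpnorm {α E : Type*} [MeasureSpace α] [NormedAddCommGroup E] {f : α → E}
    {p : ℝ} (hp : 0 < p) (hf : MemLp f (ENNReal.ofReal p)) :
    ENNReal.ofReal (Lpnorm p f) = eLpNorm f (ENNReal.ofReal p) := by
  rw [hf.eLpNorm_eq_integral_rpow_norm (ENNReal.ofReal_pos.2 hp).ne' ENNReal.ofReal_ne_top,
    ENNReal.toReal_ofReal hp.le, Lpnorm, one_div]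

theorem statement2_general {a : ℝ} (ha : 0 ≤ a) :
    ∃ C > 0, ∀ χ₀ χ : ℝ → ℝ, DyadicCutoffs χ₀ χ → ∀ f : SchwartzMap (ℝ × ℝ) ℂ,
      Lpnorm 4 (fun p : ℝ × ℝ => f p) ≤
        C * Xnorm a χ₀ χ ((3 + a) / (4 * (2 + a))) 0 (fun p => f p) := by
  set K : ℝ := 2 ^ (5 / 4 : ℝ) * 4 ^ ((3 + a) / (4 * (2 + a)))
  refine ⟨K / (2 * Real.pi), by positivity, fun χ₀ χ hχ f => ?_⟩
  have hsum : 0 ≤ K * ∑' j : ℕ, 2 ^ (j * ((3 + a) / (4 * (2 + a)))) *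
      bandEnergy a χ₀ χ (𝓕⁻ (toPlane f) : 𝓢(Plane, ℂ)) j ^ (1 / 2 : ℝ) :=
    mul_nonneg (by positivity) (tsum_nonneg fun j =>
      mul_nonneg (by positivity) (Real.rpow_nonneg (bandEnergy_nonneg hχ _ j) _))
  have h := eLpNorm_fourier_four_le_tsum_bandEnergy hχ ha (𝓕⁻ (toPlane f))
  rw [← SchwartzMap.fourier_coe, FourierTransform.fourier_fourierInv_eq, coe_toPlane,
    eLpNorm_comp_measurePreserving f.continuous.aestronglyMeasurable
      (WithLp.volume_preserving_ofLp ℝ ℝ), ← ENNReal.ofReal_ofNat 4,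
    ← ofReal_Lpnorm four_pos (f.memLp _), ENNReal.ofReal_le_ofReal_iff hsum] at h
  rwa [Xnorm_eq_tsum_bandEnergy hχ, ← mul_assoc, div_mul_cancel₀ _ (by positivity)]

theorem statement2 (a : ℝ) (ha : a ∈ Set.Icc (0 : ℝ) 1)
    (χ₀ χ : ℝ → ℝ) (hχ : DyadicCutoffs χ₀ χ) :
    ∃ C > 0, ∀ f : SchwartzMap (ℝ × ℝ) ℂ,
      Lpnorm 4 (fun p : ℝ × ℝ => f p) ≤
        C * Xnorm a χ₀ χ ((3 + a) / (4 * (2 + a))) 0 (fun p => f p) :=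
  let ⟨C, hC, h⟩ := statement2_general ha.1
  ⟨C, hC, h χ₀ χ hχ⟩
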